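/- For every auction (M, v_1, …, v_n) with nonnegative, monotone, normalized valuations, there exists a Combinatorial Walrasian Equilibrium (X, p) whose social welfare satisfies SW(X) ≥ (1/2)·max_Z SW(Z), where the maximum is over all allocations Z; i.e., every valuation profile admits a CWE that obtains at least half of the optimal (unconstrained) social welfare. -/

import Mathlib

open Finset

/-- A valuation is nonnegative, monotone, and normalized. -/
def ValidVal {ι : Type} [Fintype ι] [DecidableEq ι] (v : Finset ι → ℝ) : Prop :=
  (∀ S, 0 ≤ v S) ∧ (∀ S T : Finset ι, S ⊆ T → v S ≤ v T) ∧ v ∅ = 0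

/-- The agents' bundles are pairwise disjoint (the unallocated bundle `X₀` is the complement). -/
def IsAlloc {ι : Type} [Fintype ι] [DecidableEq ι] {n : ℕ} (X : Fin n → Finset ι) : Prop :=
  ∀ i j, i ≠ j → Disjoint (X i) (X j)

/-- The unallocated bundle `X₀` of an allocation. -/
def unalloc {ι : Type} [Fintype ι] [DecidableEq ι] {n : ℕ} (X : Fin n → Finset ι) : Finset ι :=
  Finset.univ \ Finset.univ.sup X

/-- `Γ(X)`: the nonempty bundles among `X₀, X₁, …, Xₙ`. -/
def Bundles {ι : Type} [Fintype ι] [DecidableEq ι] {n : ℕ} (X : Fin n → Finset ι) :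
    Finset (Finset ι) :=
  (insert (unalloc X) (Finset.image X Finset.univ)).erase ∅

/-- Quasilinear utility of a set `S` of bundles under bundle prices `p`. -/
def util {ι : Type} [Fintype ι] [DecidableEq ι] (v : Finset ι → ℝ) (p : Finset ι → ℝ)
    (S : Finset (Finset ι)) : ℝ :=
  v (S.sup id) - ∑ B ∈ S, p B

/-- The set of bundles assigned to agent `i`: `{Xᵢ}` if nonempty, else `∅`. -/
def own {ι : Type} [Fintype ι] [DecidableEq ι] {n : ℕ} (X : Fin n → Finset ι) (i : Fin n) :
    Finset (Finset ι) :=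
  if X i = ∅ then ∅ else {X i}

/-- Combinatorial Walrasian Equilibrium: an allocation together with nonnegative prices on the
bundles of `Γ(X)` such that each agent's own assignment maximizes his quasilinear utility
over all sets of bundles `S ⊆ Γ(X)`. -/
def IsCWE {ι : Type} [Fintype ι] [DecidableEq ι] {n : ℕ} (v : Fin n → Finset ι → ℝ)
    (X : Fin n → Finset ι) (p : Finset ι → ℝ) : Prop :=
  IsAlloc X ∧ (∀ B ∈ Bundles X, 0 ≤ p B) ∧
    ∀ i : Fin n, ∀ S ⊆ Bundles X, util (v i) p S ≤ util (v i) p (own X i)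

/-- Social welfare of an allocation. -/
def SW {ι : Type} [Fintype ι] [DecidableEq ι] {n : ℕ} (v : Fin n → Finset ι → ℝ)
    (X : Fin n → Finset ι) : ℝ :=
  ∑ i, v i (X i)

/-- Revenue of a priced allocation: the sum of prices of the allocated bundles. -/
def Revenue {ι : Type} [Fintype ι] [DecidableEq ι] {n : ℕ} (X : Fin n → Finset ι)
    (p : Finset ι → ℝ) : ℝ :=
  ∑ i ∈ Finset.univ.filter (fun i => X i ≠ ∅), p (X i)

/-!
Fix an optimal allocation `Z` and treat each of its bundles `Z j` as an indivisible lot with reserve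
price `v j (Z j) / 2`. Run an ascending auction on the lots: an agent holding nothing may grab a
favourite union of other agents' whole bundles and unsold lots, raising its price by `ε` and
dispossessing the previous holders. A grab only raises prices and only merges what is on offer, so
every agent who keeps his bundle stays satisfied with it. Prices are bounded, hence the auction
stops at an approximate equilibrium, and compactness gives an exact one as `ε → 0`.

Every agent `k` whose lot `Z k` stays unsold could buy it at the reserve price, so his utility is
at least `v k (Z k) / 2`; every sold lot contributes at least its reserve price to the revenue.
Utility and revenue add up to welfare, which is therefore at least half of the optimum.
-/

open Filter Topology
open scoped Function

section LotAuction

variable {K J : Type*}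

/-- The bundle `T` of lots can be bought when the lots are tied together as prescribed by `A`:
it contains each `A k` entirely or not at all. -/
def IsSaturated (A : K → Finset J) (T : Finset J) : Prop :=
  ∀ k, A k ⊆ T ∨ Disjoint (A k) T

/-- The quasilinear utility of buying the bundle `T` at lot prices `q`. -/
def surplus (u : Finset J → ℝ) (q : J → ℝ) (T : Finset J) : ℝ :=
  u T - ∑ j ∈ T, q j

/-- An agent with valuation `u` cannot gain more than `ε` by replacing `S` with another saturated
bundle. -/
def IsDemanded (u : Finset J → ℝ) (ε : ℝ) (A : K → Finset J) (q : J → ℝ) (S : Finset J) : Prop :=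
  ∀ T, IsSaturated A T → surplus u q T ≤ surplus u q S + ε

/-- An assignment `A` of disjoint bundles of lots together with lot prices `q` that vanish on unsold
lots. Prices are measured relative to the reserve prices, which are part of the valuations. -/
structure IsOutcome (A : K → Finset J) (q : J → ℝ) : Prop where
  disjoint : Pairwise (Disjoint on A)
  price_nonneg : 0 ≤ q
  price_eq_zero : ∀ j, (∀ k, j ∉ A k) → q j = 0

/-- A state of the ascending auction with increment `ε`: only agents who hold something are required
to be satisfied. -/
structure IsInterim (u : K → Finset J → ℝ) (ε : ℝ) (A : K → Finset J) (q : J → ℝ) : Prop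
    extends IsOutcome A q where
  isDemanded : ∀ k, (A k).Nonempty → IsDemanded (u k) ε A q (A k)

/-- An outcome in which all agents are satisfied up to `ε`. -/
structure IsApproxEquilibrium (u : K → Finset J → ℝ) (ε : ℝ) (A : K → Finset J) (q : J → ℝ) : Prop
    extends IsOutcome A q where
  isDemanded : ∀ k, IsDemanded (u k) ε A q (A k)

variable {u : K → Finset J → ℝ} {ε : ℝ} {A : K → Finset J} {q : J → ℝ} {T : Finset J} {k : K}

@[simp] lemma surplus_empty (u : Finset J → ℝ) (q : J → ℝ) : surplus u q ∅ = u ∅ := by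
  simp [surplus]

lemma isSaturated_empty (A : K → Finset J) : IsSaturated A ∅ :=
  fun _ => .inr (disjoint_empty_right _)

lemma IsSaturated.singleton {j : J} (hj : ∀ k, j ∉ A k) : IsSaturated A {j} :=
  fun k => .inr (disjoint_singleton_right.mpr (hj k))

lemma isSaturated_biUnion [DecidableEq J] (hA : Pairwise (Disjoint on A)) (I : Finset K) :
    IsSaturated A (I.biUnion A) := by
  intro k
  by_cases hk : k ∈ I
  · exact .inl (subset_biUnion_of_mem A hk)
  · refine .inr ((disjoint_biUnion_right _ _ _).mpr fun i hi => hA ?_)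
    rintro rfl
    exact hk hi

lemma IsApproxEquilibrium.isInterim (h : IsApproxEquilibrium u ε A q) : IsInterim u ε A q :=
  ⟨h.toIsOutcome, fun k _ => h.isDemanded k⟩

lemma isInterim_empty (u : K → Finset J → ℝ) (ε : ℝ) : IsInterim u ε (fun _ => ∅) 0 where
  disjoint _ _ _ := disjoint_empty_left _
  price_nonneg := le_rfl
  price_eq_zero _ _ := rfl
  isDemanded _ hk := absurd hk not_nonempty_empty

lemma IsDemanded.of_price_le {A' : K → Finset J} {q' : J → ℝ} {u : Finset J → ℝ} {S : Finset J}
    {δ : ℝ} (h : IsDemanded u ε A q S) (hsat : ∀ T, IsSaturated A' T → IsSaturated A T)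
    (hq : q ≤ q') (hS : ∑ j ∈ S, q' j ≤ ∑ j ∈ S, q j + δ) : IsDemanded u (ε + δ) A' q' S := by
  intro T hT
  have hdem := h T (hsat T hT)
  have hle : ∑ j ∈ T, q j ≤ ∑ j ∈ T, q' j := sum_le_sum fun j _ => hq j
  unfold surplus at hdem ⊢
  linarith

lemma exists_isDemanded [Finite J] (u : Finset J → ℝ) (A : K → Finset J) (q : J → ℝ) :
    ∃ T, IsSaturated A T ∧ IsDemanded u 0 A q T := by
  obtain ⟨T, hT, hmax⟩ := Set.exists_max_image {T | IsSaturated A T} (surplus u q)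
    (Set.toFinite _) ⟨∅, isSaturated_empty A⟩
  exact ⟨T, hT, fun S hS => (hmax S hS).trans_eq (add_zero _).symm⟩

section Reassign

variable [DecidableEq K] [DecidableEq J]

/-- Agent `k` takes the bundle `T`, and its lots are withdrawn from all other agents. -/
def reassign (A : K → Finset J) (k : K) (T : Finset J) : K → Finset J :=
  Function.update (fun i => A i \ T) k T

@[simp] lemma reassign_self (A : K → Finset J) (k : K) (T : Finset J) : reassign A k T k = T :=
  Function.update_self ..

lemma reassign_of_ne (A : K → Finset J) (T : Finset J) {i : K} (hi : i ≠ k) :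
    reassign A k T i = A i \ T :=
  Function.update_of_ne hi ..

lemma pairwise_disjoint_reassign (hA : Pairwise (Disjoint on A)) (k : K) (T : Finset J) :
    Pairwise (Disjoint on reassign A k T) := by
  intro i j hij
  rw [Function.onFun]
  obtain rfl | hi := eq_or_ne i k
  · rw [reassign_self, reassign_of_ne A T hij.symm]
    exact disjoint_sdiff
  obtain rfl | hj := eq_or_ne j k
  · rw [reassign_self, reassign_of_ne A T hi]
    exact sdiff_disjoint
  · rw [reassign_of_ne A T hi, reassign_of_ne A T hj]
    exact (hA hij).mono sdiff_subset sdiff_subset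

lemma notMem_of_forall_notMem_reassign (hk : A k = ∅) {j : J}
    (hj : ∀ i, j ∉ reassign A k T i) (i : K) : j ∉ A i := by
  have hjT : j ∉ T := by simpa using hj k
  obtain rfl | hi := eq_or_ne i k
  · simp [hk]
  · simpa [reassign_of_ne A T hi, hjT] using hj i

lemma IsSaturated.reassign_eq_empty_or (hT : IsSaturated A T) {i : K} (hi : i ≠ k) :
    reassign A k T i = ∅ ∨ Disjoint (A i) T ∧ reassign A k T i = A i := by
  rw [reassign_of_ne A T hi, sdiff_eq_empty_iff_subset]
  exact (hT i).imp_right fun hdisj => ⟨hdisj, sdiff_eq_self_of_disjoint hdisj⟩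

lemma IsSaturated.of_reassign (hT : IsSaturated A T) (hk : A k = ∅) {S : Finset J}
    (hS : IsSaturated (reassign A k T) S) : IsSaturated A S := by
  intro i
  obtain rfl | hi := eq_or_ne i k
  · simp [hk]
  obtain hsub | hdisj := hT i
  · have hTS := hS k
    rw [reassign_self] at hTS
    exact hTS.imp hsub.trans (disjoint_of_subset_left hsub)
  · simpa [reassign_of_ne A T hi, sdiff_eq_self_of_disjoint hdisj] using hS i

lemma IsInterim.reassign (h : IsInterim u ε A q) (hε : 0 ≤ ε) (hk : A k = ∅)
    (hT : IsSaturated A T) (hdem : IsDemanded (u k) 0 A q T) {t : J} (ht : t ∈ T) :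
    IsInterim u ε (reassign A k T) (q + Pi.single t ε) := by
  have hq : q ≤ q + Pi.single t ε := le_add_of_nonneg_right (Pi.single_nonneg.mpr hε)
  refine ⟨⟨pairwise_disjoint_reassign h.disjoint k T, h.price_nonneg.trans hq, fun j hj => ?_⟩,
    fun i hi => ?_⟩
  · have hjt : j ≠ t := by
      rintro rfl
      exact hj k (by simpa using ht)
    simpa [hjt] using h.price_eq_zero j (notMem_of_forall_notMem_reassign hk hj)
  obtain rfl | hik := eq_or_ne i k
  · rw [reassign_self, ← zero_add ε]
    exact hdem.of_price_le (fun S => hT.of_reassign hk) (by simpa using hq)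
      (by simp [sum_add_distrib, sum_pi_single', ht])
  obtain hempty | ⟨hdisj, hkeep⟩ := hT.reassign_eq_empty_or hik
  · exact absurd hempty hi.ne_empty
  · have htA : t ∉ A i := fun htA => disjoint_left.mp hdisj htA ht
    rw [hkeep] at hi ⊢
    rw [← add_zero ε]
    exact (h.isDemanded i hi).of_price_le (fun S => hT.of_reassign hk) (by simpa using hq)
      (by simp [sum_add_distrib, sum_pi_single', htA])

end Reassign

lemma IsInterim.exists_sum_price_eq_add [Fintype J] (h : IsInterim u ε A q) (hε : 0 ≤ ε)
    (hk : ¬ IsDemanded (u k) ε A q (A k)) :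
    ∃ A' q', IsInterim u ε A' q' ∧ ∑ j, q' j = ∑ j, q j + ε := by
  classical
  have hAk : A k = ∅ := not_nonempty_iff_eq_empty.mp (mt (h.isDemanded k) hk)
  obtain ⟨T, hT, hdem⟩ := exists_isDemanded (u k) A q
  obtain ⟨t, ht⟩ : T.Nonempty := by
    rw [nonempty_iff_ne_empty]
    rintro rfl
    rw [hAk] at hk
    exact hk fun S hS => (hdem S hS).trans (by gcongr)
  exact ⟨_, _, h.reassign hε hAk hT hdem ht, by simp [sum_add_distrib]⟩

lemma IsInterim.price_le (h : IsInterim u ε A q) (hε : 0 ≤ ε) {V : ℝ} (hV : 0 ≤ V)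
    (hu : ∀ k T, u k T - u k ∅ ≤ V) (j : J) : q j ≤ V + ε := by
  by_cases hj : ∀ k, j ∉ A k
  · rw [h.price_eq_zero j hj]
    positivity
  push Not at hj
  obtain ⟨k, hjk⟩ := hj
  have hempty := h.isDemanded k ⟨j, hjk⟩ ∅ (isSaturated_empty A)
  rw [surplus_empty, surplus] at hempty
  calc q j ≤ ∑ i ∈ A k, q i := single_le_sum (fun i _ => h.price_nonneg i) hjk
    _ ≤ u k (A k) - u k ∅ + ε := by linarith
    _ ≤ V + ε := by gcongr; exact hu k _

lemma exists_forall_sub_empty_le [Finite K] [Finite J] (u : K → Finset J → ℝ) :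
    ∃ V, 0 ≤ V ∧ ∀ k T, u k T - u k ∅ ≤ V := by
  obtain ⟨V, hV⟩ := Finite.exists_le fun x : K × Finset J => u x.1 x.2 - u x.1 ∅
  exact ⟨max V 0, le_max_right _ _, fun k T => (hV (k, T)).trans (le_max_left _ _)⟩

lemma exists_isApproxEquilibrium_of_pos [Finite K] [Finite J] (u : K → Finset J → ℝ)
    (hε : 0 < ε) : ∃ A q, IsApproxEquilibrium u ε A q := by
  have := Fintype.ofFinite J
  obtain ⟨V, hV, hu⟩ := exists_forall_sub_empty_le u
  let totals : Set ℝ := {x | ∃ A q, IsInterim u ε A q ∧ ∑ j, q j = x}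
  have hne : totals.Nonempty := ⟨_, _, _, isInterim_empty u ε, rfl⟩
  have hbdd : BddAbove totals := by
    refine ⟨∑ _ : J, (V + ε), ?_⟩
    rintro _ ⟨A, q, h, rfl⟩
    exact sum_le_sum fun j _ => h.price_le hε.le hV hu j
  obtain ⟨_, ⟨A, q, h, rfl⟩, hlt⟩ := exists_lt_of_lt_csSup hne (sub_lt_self (sSup totals) hε)
  refine ⟨A, q, h.toIsOutcome, fun k => ?_⟩
  by_contra hk
  obtain ⟨A', q', h', hsum⟩ := h.exists_sum_price_eq_add hε.le hk
  have hle : ∑ j, q' j ≤ sSup totals := le_csSup hbdd ⟨A', q', h', rfl⟩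
  linarith

lemma IsApproxEquilibrium.of_tendsto {α : Type*} {l : Filter α} [l.NeBot] {e : α → ℝ}
    {Q : α → J → ℝ} (he : Tendsto e l (𝓝 ε)) (hQ : Tendsto Q l (𝓝 q))
    (h : ∀ᶠ a in l, IsApproxEquilibrium u (e a) A (Q a)) : IsApproxEquilibrium u ε A q := by
  have hQ_apply (j : J) : Tendsto (fun a => Q a j) l (𝓝 (q j)) := tendsto_pi_nhds.mp hQ j
  have hsurplus (k : K) (T : Finset J) :
      Tendsto (fun a => surplus (u k) (Q a) T) l (𝓝 (surplus (u k) q T)) :=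
    tendsto_const_nhds.sub (tendsto_finsetSum T fun j _ => hQ_apply j)
  refine ⟨⟨h.exists.choose_spec.disjoint, fun j => ?_, fun j hj => ?_⟩, fun k T hT => ?_⟩
  · exact ge_of_tendsto (hQ_apply j) (h.mono fun a ha => ha.price_nonneg j)
  · exact tendsto_nhds_unique_of_eventuallyEq (hQ_apply j) tendsto_const_nhds
      (h.mono fun a ha => ha.price_eq_zero j hj)
  · exact le_of_tendsto_of_tendsto (hsurplus k T) ((hsurplus k (A k)).add he)
      (h.mono fun a ha => ha.isDemanded k T hT)

theorem exists_isApproxEquilibrium_zero [Finite K] [Finite J] (u : K → Finset J → ℝ) :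
    ∃ A q, IsApproxEquilibrium u 0 A q := by
  obtain ⟨V, hV, hu⟩ := exists_forall_sub_empty_le u
  choose! A Q h using fun ε (hε : 0 < ε) => exists_isApproxEquilibrium_of_pos u hε
  let U : Ultrafilter ℝ := .of (𝓝[>] 0)
  have hU : (U : Filter ℝ) ≤ 𝓝[>] 0 := Ultrafilter.of_le _
  have hmem : ∀ᶠ ε in (U : Filter ℝ), ε ∈ Set.Ioc 0 1 := hU (Ioc_mem_nhdsGT one_pos)
  obtain ⟨A₀, hA₀⟩ : ∃ A₀, ∀ᶠ ε in (U : Filter ℝ), A ε = A₀ :=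
    Ultrafilter.eventually_exists_iff.mp (.of_forall fun ε => ⟨A ε, rfl⟩)
  have hbdd : ∀ᶠ ε in (U : Filter ℝ), Q ε ∈ Set.Icc 0 fun _ => V + 1 := by
    filter_upwards [hmem] with ε hε
    exact ⟨(h ε hε.1).price_nonneg, fun j => ((h ε hε.1).isInterim.price_le hε.1.le hV hu j).trans
      (add_le_add_right hε.2 V)⟩
  obtain ⟨q, -, hq⟩ := isCompact_Icc.ultrafilter_le_nhds' (U.map Q) hbdd
  refine ⟨A₀, q, .of_tendsto (hU.trans nhdsWithin_le_nhds) hq ?_⟩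
  filter_upwards [hmem, hA₀] with ε hε hAε
  exact hAε ▸ h ε hε.1

lemma IsApproxEquilibrium.sum_unsold_le [Fintype J] [DecidableEq J] {u : J → Finset J → ℝ}
    {A : J → Finset J} (h : IsApproxEquilibrium u 0 A q) (hu : ∀ k, u k ∅ = 0) :
    ∑ k ∈ (univ.biUnion A)ᶜ, u k {k} ≤ ∑ k, u k (A k) := by
  have hnonneg (k : J) : 0 ≤ surplus (u k) q (A k) := by
    simpa [hu] using h.isDemanded k ∅ (isSaturated_empty A)
  have hunsold : ∀ k ∈ (univ.biUnion A)ᶜ, u k {k} ≤ surplus (u k) q (A k) := by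
    intro k hk
    have hkA : ∀ i, k ∉ A i := by simpa using hk
    simpa [surplus, h.price_eq_zero k hkA] using h.isDemanded k {k} (.singleton hkA)
  calc ∑ k ∈ (univ.biUnion A)ᶜ, u k {k}
      ≤ ∑ k ∈ (univ.biUnion A)ᶜ, surplus (u k) q (A k) := sum_le_sum hunsold
    _ ≤ ∑ k, surplus (u k) q (A k) :=
      sum_le_sum_of_subset_of_nonneg (subset_univ _) fun k _ _ => hnonneg k
    _ ≤ ∑ k, u k (A k) :=
      sum_le_sum fun k _ => sub_le_self _ (sum_nonneg fun j _ => h.price_nonneg j)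

end LotAuction

section BundlePrice

variable {ι K : Type*} [DecidableEq ι] [Fintype K] {X : K → Finset ι} {π : K → ℝ} {V : ℝ}

/-- Bundle prices charging `π k` for the bundle of agent `k`. The price `V` is charged for every
other set, in particular for the unallocated bundle. -/
def bundlePrice (X : K → Finset ι) (π : K → ℝ) (V : ℝ) (B : Finset ι) : ℝ :=
  if B ∈ univ.image X then ∑ k with X k = B, π k else V

lemma bundlePrice_nonneg (hπ : 0 ≤ π) (hV : 0 ≤ V) (B : Finset ι) : 0 ≤ bundlePrice X π V B := by
  unfold bundlePrice
  split_ifs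
  exacts [sum_nonneg fun k _ => hπ k, hV]

lemma bundlePrice_apply (hX : Pairwise (Disjoint on X)) {i : K} (hi : X i ≠ ∅) :
    bundlePrice X π V (X i) = π i := by
  have hunique (k : K) (hk : X k = X i) : k = i :=
    hX.eq fun hdisj : Disjoint (X k) (X i) => hi (disjoint_self.mp (hk ▸ hdisj))
  rw [bundlePrice, if_pos (mem_image_of_mem X (mem_univ i))]
  exact sum_eq_single_of_mem i (by simp) fun k hk hki => absurd (hunique k (by simpa using hk)) hki

lemma sum_bundlePrice {S : Finset (Finset ι)} (hS : S ⊆ univ.image X) :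
    ∑ B ∈ S, bundlePrice X π V B = ∑ k with X k ∈ S, π k := by
  rw [← sum_fiberwise_of_maps_to (t := S) (g := X) (by simp)]
  refine sum_congr rfl fun B hB => ?_
  rw [bundlePrice, if_pos (hS hB), filter_filter]
  congr 1
  ext k
  simp +contextual [hB]

lemma sup_id_eq_biUnion_of_subset_image {S : Finset (Finset ι)} (hS : S ⊆ univ.image X) :
    S.sup id = ({k | X k ∈ S} : Finset K).biUnion X := by
  have himage : S = ({k | X k ∈ S} : Finset K).image X := by
    simpa [filter_image] using (filter_mem_eq_inter.trans (inter_eq_right.mpr hS)).symm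
  conv_lhs => rw [himage, sup_image, Function.id_comp, sup_eq_biUnion]

end BundlePrice

section NetValue

variable {ι J : Type*} [DecidableEq ι]

/-- The value of the set `T` of lots `Z j`, net of the reserve prices `r`. -/
def netValue (v : Finset ι → ℝ) (Z : J → Finset ι) (r : J → ℝ) (T : Finset J) : ℝ :=
  v (T.biUnion Z) - ∑ j ∈ T, r j

lemma surplus_netValue (v : Finset ι → ℝ) (Z : J → Finset ι) (r q : J → ℝ) (T : Finset J) :
    surplus (netValue v Z r) q T = v (T.biUnion Z) - ∑ j ∈ T, (r j + q j) := by
  rw [surplus, netValue, sum_add_distrib, sub_sub]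

lemma pairwise_disjoint_biUnion {K : Type*} {Z : J → Finset ι} {A : K → Finset J}
    (hZ : Pairwise (Disjoint on Z)) (hA : Pairwise (Disjoint on A)) :
    Pairwise (Disjoint on fun k => (A k).biUnion Z) := by
  intro i k hik
  simp only [Function.onFun, disjoint_biUnion_left, disjoint_biUnion_right]
  exact fun a ha b hb => hZ (disjoint_iff_ne.mp (hA hik.symm) a ha b hb).symm

end NetValue

section CWE

variable {ι : Type} [Fintype ι] [DecidableEq ι] {n : ℕ} {v : Fin n → Finset ι → ℝ}

lemma IsAlloc.sub_le_util_own {X : Fin n → Finset ι} (hX : IsAlloc X) {v : Finset ι → ℝ}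
    (hv : v ∅ = 0) {π : Fin n → ℝ} (hπ : 0 ≤ π) (V : ℝ) (i : Fin n) :
    v (X i) - π i ≤ util v (bundlePrice X π V) (own X i) := by
  by_cases hXi : X i = ∅
  · simpa [util, own, hXi, hv] using hπ i
  · simp [util, own, hXi, bundlePrice_apply hX hXi]

lemma exists_isCWE_of_forall_biUnion_le (hv : ∀ i, ValidVal (v i)) {X : Fin n → Finset ι}
    (hX : IsAlloc X) {π : Fin n → ℝ} (hπ : 0 ≤ π)
    (hdem : ∀ i I, v i (I.biUnion X) - ∑ k ∈ I, π k ≤ v i (X i) - π i) :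
    ∃ p, IsCWE v X p := by
  let V := ∑ i, v i univ
  have hV : 0 ≤ V := sum_nonneg fun i _ => (hv i).1 _
  have hvV (i : Fin n) (T : Finset ι) : v i T ≤ V :=
    ((hv i).2.1 _ _ (subset_univ T)).trans
      (single_le_sum (f := fun i => v i univ) (fun i _ => (hv i).1 _) (mem_univ i))
  have hp := bundlePrice_nonneg (X := X) hπ hV
  refine ⟨bundlePrice X π V, hX, fun B _ => hp B, fun i S _ => ?_⟩
  refine le_trans ?_ (hX.sub_le_util_own (hv i).2.2 hπ V i)
  by_cases hS : S ⊆ univ.image X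
  · rw [util, sum_bundlePrice hS, sup_id_eq_biUnion_of_subset_image hS]
    exact hdem i _
  -- A set containing the unallocated bundle costs at least as much as it is worth to anybody.
  · obtain ⟨B, hBS, hB⟩ := not_subset.mp hS
    have hpB : bundlePrice X π V B = V := if_neg hB
    calc util (v i) (bundlePrice X π V) S
        ≤ V - bundlePrice X π V B :=
          sub_le_sub (hvV i _) (single_le_sum (fun B _ => hp B) hBS)
      _ = v i ((∅ : Finset (Fin n)).biUnion X) - ∑ k ∈ (∅ : Finset (Fin n)), π k := by
          simp [hpB, (hv i).2.2]
      _ ≤ v i (X i) - π i := hdem i ∅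

lemma IsApproxEquilibrium.exists_isCWE (hv : ∀ i, ValidVal (v i)) {J : Type*} {Z : J → Finset ι}
    (hZ : Pairwise (Disjoint on Z)) {r q : J → ℝ} (hr : 0 ≤ r) {A : Fin n → Finset J}
    (h : IsApproxEquilibrium (fun k => netValue (v k) Z r) 0 A q) :
    ∃ p, IsCWE v (fun k => (A k).biUnion Z) p := by
  classical
  refine exists_isCWE_of_forall_biUnion_le hv (pairwise_disjoint_biUnion hZ h.disjoint)
    (π := fun k => ∑ j ∈ A k, (r j + q j))
    (fun k => sum_nonneg fun j _ => add_nonneg (hr j) (h.price_nonneg j)) fun i I => ?_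
  have hdem := h.isDemanded i _ (isSaturated_biUnion h.disjoint I)
  rwa [surplus_netValue, surplus_netValue, add_zero, biUnion_biUnion,
    sum_biUnion fun a _ b _ hab => h.disjoint hab] at hdem

theorem IsAlloc.exists_isCWE_half_SW_le (hv : ∀ i, ValidVal (v i)) {Z : Fin n → Finset ι}
    (hZ : IsAlloc Z) : ∃ X p, IsCWE v X p ∧ SW v Z / 2 ≤ SW v X := by
  let r : Fin n → ℝ := fun k => v k (Z k) / 2
  have hr : 0 ≤ r := fun k => div_nonneg ((hv k).1 _) zero_le_two
  obtain ⟨A, q, h⟩ := exists_isApproxEquilibrium_zero fun k => netValue (v k) Z r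
  obtain ⟨p, hp⟩ := h.exists_isCWE hv hZ hr
  refine ⟨_, p, hp, ?_⟩
  have hunsold : ∑ k ∈ (univ.biUnion A)ᶜ, r k ≤ ∑ k, netValue (v k) Z r (A k) := by
    refine le_of_eq_of_le (sum_congr rfl fun k _ => ?_)
      (h.sum_unsold_le fun k => by simp [netValue, (hv k).2.2])
    simp only [netValue, singleton_biUnion, sum_singleton, r, sub_half]
  have hsold : ∑ k ∈ univ.biUnion A, r k = ∑ k, ∑ j ∈ A k, r j :=
    sum_biUnion fun a _ b _ hab => h.disjoint hab
  calc SW v Z / 2 = ∑ k, r k := sum_div ..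
    _ = ∑ k ∈ univ.biUnion A, r k + ∑ k ∈ (univ.biUnion A)ᶜ, r k :=
      (sum_add_sum_compl _ _).symm
    _ ≤ ∑ k, ∑ j ∈ A k, r j + ∑ k, netValue (v k) Z r (A k) := by rw [hsold]; gcongr
    _ = SW v fun k => (A k).biUnion Z := by simp [netValue, SW]

lemma exists_isAlloc_forall_SW_le (v : Fin n → Finset ι → ℝ) :
    ∃ Z, IsAlloc Z ∧ ∀ Y, IsAlloc Y → SW v Y ≤ SW v Z :=
  Set.exists_max_image {Z | IsAlloc Z} (SW v) (Set.toFinite _)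
    ⟨fun _ => ∅, fun _ _ _ => disjoint_empty_left _⟩

end CWE

/-- Every valuation profile admits a CWE obtaining at least half of the optimal
(unconstrained) social welfare. -/
theorem cwe_half_optimal_welfare {ι : Type} [Fintype ι] [DecidableEq ι] (n : ℕ)
    (v : Fin n → Finset ι → ℝ) (hv : ∀ i, ValidVal (v i)) :
    ∃ (X : Fin n → Finset ι) (p : Finset ι → ℝ),
      IsCWE v X p ∧ ∀ Z : Fin n → Finset ι, IsAlloc Z → SW v X ≥ (1 / 2) * SW v Z := by
  obtain ⟨Z, hZ, hopt⟩ := exists_isAlloc_forall_SW_le v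
  obtain ⟨X, p, hCWE, hhalf⟩ := hZ.exists_isCWE_half_SW_le hv
  refine ⟨X, p, hCWE, fun Y hY => ?_⟩
  have hYZ := hopt Y hY
  linarith
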